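/- Under Assumption 1 (correctness of the greedy elimination algorithm), let i ∈ [m], let B ⊆ [m]∖{i} be a causal Markov blanket of X_i, and let k ∈ B. Then I(X_k → X_i ‖ X_{B∖{k}}) = 0 if and only if k ∉ A(i), and in that case B∖{k} is again a causal Markov blanket of X_i. Consequently, any causal Markov blanket B of X_i such that I(X_k → X_i ‖ X_{B∖{k}}) > 0 for every k ∈ B is equal to A(i); in particular, the procedure that starts from B = [m]∖{i} and repeatedly deletes any k ∈ B with I(X_k → X_i ‖ X_{B∖{k}}) = 0 terminates at A(i) regardless of the order of deletions. -/

import Mathlib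

open Finset

/-- Probability of an event under the probability mass function `p` on a finite space. -/
noncomputable def pr {Ω : Type} [Fintype Ω] (p : Ω → ℝ) (E : Set Ω) : ℝ :=
  ∑ ω : Ω, E.indicator p ω

/-- Shannon conditional mutual information `I(A ; B | C)` of finite-valued random variables
on a finite probability space with pmf `p` (terms with vanishing probability contribute `0`,
by the conventions `Real.log 0 = 0`, `x / 0 = 0`). -/
noncomputable def cmi {Ω α β γ : Type} [Fintype Ω] [Fintype α] [Fintype β] [Fintype γ]
    (p : Ω → ℝ) (A : Ω → α) (B : Ω → β) (C : Ω → γ) : ℝ :=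
  ∑ a : α, ∑ b : β, ∑ c : γ,
    pr p {ω | A ω = a ∧ B ω = b ∧ C ω = c} *
      Real.log (pr p {ω | A ω = a ∧ B ω = b ∧ C ω = c} * pr p {ω | C ω = c} /
        (pr p {ω | A ω = a ∧ C ω = c} * pr p {ω | B ω = b ∧ C ω = c}))

/-- `A` and `B` are conditionally independent given `C` (under the pmf `p`). -/
def CondIndep {Ω α β γ : Type} [Fintype Ω] (p : Ω → ℝ)
    (A : Ω → α) (B : Ω → β) (C : Ω → γ) : Prop :=
  ∀ (a : α) (b : β) (c : γ),
    pr p {ω | A ω = a ∧ B ω = b ∧ C ω = c} * pr p {ω | C ω = c}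
      = pr p {ω | A ω = a ∧ C ω = c} * pr p {ω | B ω = b ∧ C ω = c}

/-- Trajectories of `m` processes over `n` time steps with alphabet `𝒳`:
`ω i j` is the value of process `i` at (0-indexed) time `j`. -/
abbrev Traj (m n : ℕ) (𝒳 : Type) := Fin m → Fin n → 𝒳

/-- The past `X_S^{j-1}`: the values of the processes in `S` at times strictly before `j`;
all other entries are masked by `none`. -/
def past {m n : ℕ} {𝒳 : Type} (S : Finset (Fin m)) (j : Fin n) (ω : Traj m n 𝒳) :
    Fin m → Fin n → Option 𝒳 :=
  fun k t => if k ∈ S ∧ t < j then some (ω k t) else none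

/-- Causally conditioned directed information
`I(X_S → X_i ‖ X_T) := Σ_{j=1}^{n} I(X_S^{j-1} ; X_{i,j} | X_i^{j-1}, X_T^{j-1})`. -/
noncomputable def di {m n : ℕ} {𝒳 : Type} [Fintype 𝒳] [DecidableEq 𝒳]
    (p : Traj m n 𝒳 → ℝ) (S : Finset (Fin m)) (i : Fin m) (T : Finset (Fin m)) : ℝ :=
  ∑ j : Fin n,
    cmi p (past S j) (fun ω => ω i j) (fun ω => (past {i} j ω, past T j ω))

/-- Assumption 1: the joint distribution is strictly positive (and is a pmf), and at each
time `j` the variables `X_{1,j}, …, X_{m,j}` are mutually conditionally independent given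
the full past `X_{[m]}^{j-1}` (stated in the division-free form
`P(joint ∧ past) · P(past)^{m-1} = Π_i P(X_{i,j} = x_i ∧ past)`). -/
def Assumption1 {m n : ℕ} {𝒳 : Type} [Fintype 𝒳] [DecidableEq 𝒳]
    (p : Traj m n 𝒳 → ℝ) : Prop :=
  (∀ ω, 0 < p ω) ∧ (∑ ω : Traj m n 𝒳, p ω = 1) ∧
    ∀ (j : Fin n) (x : Fin m → 𝒳) (h : Fin m → Fin n → Option 𝒳),
      pr p {ω | (∀ i, ω i j = x i) ∧ past Finset.univ j ω = h} *
          pr p {ω | past Finset.univ j ω = h} ^ (m - 1)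
        = ∏ i : Fin m, pr p {ω | ω i j = x i ∧ past Finset.univ j ω = h}

/-- `S ⊆ [m]∖{i}` is a causal Markov blanket of `X_i` if
`I(X_{[m]∖({i}∪S)} → X_i ‖ X_S) = 0`. -/
def IsCausalBlanket {m n : ℕ} {𝒳 : Type} [Fintype 𝒳] [DecidableEq 𝒳]
    (p : Traj m n 𝒳 → ℝ) (i : Fin m) (S : Finset (Fin m)) : Prop :=
  S ⊆ Finset.univ.erase i ∧ di p (Finset.univ.erase i \ S) i S = 0

/-- A causal Markov boundary `A(i)` of `X_i` is a causal Markov blanket of minimum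
cardinality. -/
def IsCausalBoundary {m n : ℕ} {𝒳 : Type} [Fintype 𝒳] [DecidableEq 𝒳]
    (p : Traj m n 𝒳 → ℝ) (i : Fin m) (A : Finset (Fin m)) : Prop :=
  IsCausalBlanket p i A ∧
    ∀ B : Finset (Fin m), IsCausalBlanket p i B → A.card ≤ B.card

section ProbabilityOfEvents

variable {Ω α β γ : Type} [Fintype Ω] {p : Ω → ℝ}

lemma pr_setOf (p : Ω → ℝ) (Q : Ω → Prop) [DecidablePred Q] :
    pr p {ω | Q ω} = ∑ ω : Ω, if Q ω then p ω else 0 := by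
  simp [pr, Set.indicator_apply]

lemma pr_nonneg (hp : ∀ ω, 0 < p ω) (E : Set Ω) : 0 ≤ pr p E :=
  Finset.sum_nonneg fun ω _ => Set.indicator_nonneg (fun ω _ => (hp ω).le) ω

lemma pr_pos_of_mem (hp : ∀ ω, 0 < p ω) {E : Set Ω} {ω : Ω} (h : ω ∈ E) : 0 < pr p E := by
  refine Finset.sum_pos' (fun ω _ => Set.indicator_nonneg (fun ω _ => (hp ω).le) ω)
    ⟨ω, Finset.mem_univ _, ?_⟩
  rw [Set.indicator_of_mem h]
  exact hp ω

lemma exists_mem_of_pr_ne_zero {E : Set Ω} (h : pr p E ≠ 0) : ∃ ω, ω ∈ E := by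
  by_contra! hE
  exact h (Finset.sum_eq_zero fun ω _ => Set.indicator_of_notMem (hE ω) p)

lemma sum_pr_fiber [Fintype α] (p : Ω → ℝ) (A : Ω → α) (Q : Ω → Prop) :
    ∑ a, pr p {ω | A ω = a ∧ Q ω} = pr p {ω | Q ω} := by
  classical
  simp only [pr_setOf, ite_and]
  rw [Finset.sum_comm]
  simp

/-- Averaging over the fibres of a coarse variable `C`: if the conditional probability of `E`
given a finer variable `F` equals `r` on the fibre `C = c`, then so does the conditional
probability of `E` given `C = c`. -/
lemma pr_and_fiber_eq_mul (hp : ∀ ω, 0 < p ω) {F : Ω → α} {C : Ω → γ}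
    (hFC : ∀ ω ω', F ω = F ω' → C ω = C ω') (E : Ω → Prop) (c : γ) (r : ℝ)
    (h : ∀ ω, C ω = c →
      pr p {ω' | E ω' ∧ F ω' = F ω} = r * pr p {ω' | F ω' = F ω}) :
    pr p {ω | E ω ∧ C ω = c} = r * pr p {ω | C ω = c} := by
  classical
  have hpos : ∀ ω, 0 < pr p {ω' | F ω' = F ω} := fun ω =>
    pr_pos_of_mem hp (ω := ω) rfl
  calc pr p {ω | E ω ∧ C ω = c}
      = ∑ ω'' : Ω, ∑ ω' : Ω, if (E ω'' ∧ C ω'' = c) ∧ F ω' = F ω'' then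
          p ω'' * p ω' / pr p {ω | F ω = F ω''} else 0 := by
        rw [pr_setOf]
        refine Finset.sum_congr rfl fun ω'' _ => ?_
        split_ifs with hE
        · have hs := pr_setOf p fun ω => F ω = F ω''
          have := (hpos ω'').ne'
          calc p ω'' = p ω'' / pr p {ω | F ω = F ω''} *
                ∑ ω' : Ω, (if F ω' = F ω'' then p ω' else 0) := by
                rw [← hs]; field_simp
            _ = _ := by
                rw [Finset.mul_sum]
                refine Finset.sum_congr rfl fun ω' _ => ?_
                simp only [hE, true_and, and_self]
                split_ifs
                · ring
                · simp
        · simp [hE]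
    _ = ∑ ω' : Ω, ∑ ω'' : Ω, if C ω' = c ∧ (E ω'' ∧ F ω'' = F ω') then
          p ω'' * p ω' / pr p {ω | F ω = F ω'} else 0 := by
        rw [Finset.sum_comm]
        refine Finset.sum_congr rfl fun ω' _ => Finset.sum_congr rfl fun ω'' _ => ?_
        by_cases hF : F ω' = F ω''
        · simp only [hF, hFC _ _ hF, and_true]
          simp only [and_comm]
        · simp [hF, Ne.symm hF]
    _ = ∑ ω' : Ω, if C ω' = c then r * p ω' else 0 := by
        refine Finset.sum_congr rfl fun ω' _ => ?_
        split_ifs with hC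
        · have hs := pr_setOf p fun ω => E ω ∧ F ω = F ω'
          have := (hpos ω').ne'
          calc _ = (∑ ω'' : Ω, if E ω'' ∧ F ω'' = F ω' then p ω'' else 0) *
                (p ω' / pr p {ω | F ω = F ω'}) := by
                rw [Finset.sum_mul]
                refine Finset.sum_congr rfl fun ω'' _ => ?_
                simp only [hC, true_and]
                split_ifs
                · ring
                · simp
            _ = r * p ω' := by
                rw [← hs, h ω' hC]; field_simp
        · simp [hC]
    _ = r * pr p {ω | C ω = c} := by
        rw [pr_setOf, Finset.mul_sum]
        simp

lemma pr_sub_le_pr_mul_log (hp : ∀ ω, 0 < p ω) (A : Ω → α) (B : Ω → β) (C : Ω → γ)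
    (a : α) (b : β) (c : γ) :
    pr p {ω | A ω = a ∧ B ω = b ∧ C ω = c} -
        pr p {ω | A ω = a ∧ C ω = c} * pr p {ω | B ω = b ∧ C ω = c} / pr p {ω | C ω = c} ≤
      pr p {ω | A ω = a ∧ B ω = b ∧ C ω = c} *
        Real.log (pr p {ω | A ω = a ∧ B ω = b ∧ C ω = c} * pr p {ω | C ω = c} /
          (pr p {ω | A ω = a ∧ C ω = c} * pr p {ω | B ω = b ∧ C ω = c})) := by
  by_cases h : pr p {ω | A ω = a ∧ B ω = b ∧ C ω = c} = 0
  · rw [h]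
    have : 0 ≤ pr p {ω | A ω = a ∧ C ω = c} * pr p {ω | B ω = b ∧ C ω = c} /
        pr p {ω | C ω = c} :=
      div_nonneg (mul_nonneg (pr_nonneg hp _) (pr_nonneg hp _)) (pr_nonneg hp _)
    linarith
  · obtain ⟨ω, hA, hB, hC⟩ := exists_mem_of_pr_ne_zero h
    have h1 : 0 < pr p {ω | A ω = a ∧ B ω = b ∧ C ω = c} := pr_pos_of_mem hp ⟨hA, hB, hC⟩
    have h2 : 0 < pr p {ω | C ω = c} := pr_pos_of_mem hp hC
    have h3 : 0 < pr p {ω | A ω = a ∧ C ω = c} := pr_pos_of_mem hp ⟨hA, hC⟩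
    have h4 : 0 < pr p {ω | B ω = b ∧ C ω = c} := pr_pos_of_mem hp ⟨hB, hC⟩
    refine le_trans (le_of_eq ?_)
      (mul_le_mul_of_nonneg_left (Real.one_sub_inv_le_log_of_pos (by positivity)) h1.le)
    field_simp

variable [Fintype α] [Fintype β] [Fintype γ]

lemma sum_pr_sub_eq_zero (p : Ω → ℝ) (A : Ω → α) (B : Ω → β) (C : Ω → γ) :
    ∑ a : α, ∑ b : β, ∑ c : γ,
      (pr p {ω | A ω = a ∧ B ω = b ∧ C ω = c} -
        pr p {ω | A ω = a ∧ C ω = c} * pr p {ω | B ω = b ∧ C ω = c} /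
          pr p {ω | C ω = c}) = 0 := by
  have hc : ∀ c, ∑ a : α, ∑ b : β,
      (pr p {ω | A ω = a ∧ B ω = b ∧ C ω = c} -
        pr p {ω | A ω = a ∧ C ω = c} * pr p {ω | B ω = b ∧ C ω = c} /
          pr p {ω | C ω = c}) = 0 := by
    intro c
    simp only [Finset.sum_sub_distrib]
    rw [Finset.sum_comm]
    simp only [sum_pr_fiber p A, ← Finset.sum_div, ← Finset.mul_sum,
      sum_pr_fiber p B fun ω => C ω = c, ← Finset.sum_mul]
    by_cases h : pr p {ω | C ω = c} = 0
    · simp [h]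
    · field_simp
      ring
  calc _ = ∑ a : α, ∑ c : γ, ∑ b : β, _ := Finset.sum_congr rfl fun a _ => Finset.sum_comm
    _ = ∑ c : γ, ∑ a : α, ∑ b : β, _ := Finset.sum_comm
    _ = 0 := Finset.sum_eq_zero fun c _ => hc c

lemma cmi_nonneg (hp : ∀ ω, 0 < p ω) (A : Ω → α) (B : Ω → β) (C : Ω → γ) :
    0 ≤ cmi p A B C := by
  rw [← sum_pr_sub_eq_zero p A B C]
  exact Finset.sum_le_sum fun a _ => Finset.sum_le_sum fun b _ => Finset.sum_le_sum fun c _ =>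
    pr_sub_le_pr_mul_log hp A B C a b c

lemma cmi_eq_zero_iff (hp : ∀ ω, 0 < p ω) (A : Ω → α) (B : Ω → β) (C : Ω → γ) :
    cmi p A B C = 0 ↔ ∀ ω₀,
      pr p {ω | A ω = A ω₀ ∧ B ω = B ω₀ ∧ C ω = C ω₀} * pr p {ω | C ω = C ω₀} =
        pr p {ω | A ω = A ω₀ ∧ C ω = C ω₀} * pr p {ω | B ω = B ω₀ ∧ C ω = C ω₀} := by
  constructor
  · intro h ω₀
    have hle := fun a b c => pr_sub_le_pr_mul_log hp A B C a b c
    have heq := (sum_pr_sub_eq_zero p A B C).trans h.symm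
    unfold cmi at heq
    have ha := (Finset.sum_eq_sum_iff_of_le fun a _ => Finset.sum_le_sum fun b _ =>
      Finset.sum_le_sum fun c _ => hle a b c).1 heq (A ω₀) (Finset.mem_univ _)
    have hb := (Finset.sum_eq_sum_iff_of_le fun b _ =>
      Finset.sum_le_sum fun c _ => hle _ b c).1 ha (B ω₀) (Finset.mem_univ _)
    have hc := (Finset.sum_eq_sum_iff_of_le fun c _ => hle _ _ c).1 hb (C ω₀)
      (Finset.mem_univ _)
    have h1 : 0 < pr p {ω | A ω = A ω₀ ∧ B ω = B ω₀ ∧ C ω = C ω₀} :=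
      pr_pos_of_mem hp ⟨rfl, rfl, rfl⟩
    have h2 : 0 < pr p {ω | C ω = C ω₀} := pr_pos_of_mem hp (ω := ω₀) rfl
    have h3 : 0 < pr p {ω | A ω = A ω₀ ∧ C ω = C ω₀} := pr_pos_of_mem hp ⟨rfl, rfl⟩
    have h4 : 0 < pr p {ω | B ω = B ω₀ ∧ C ω = C ω₀} := pr_pos_of_mem hp ⟨rfl, rfl⟩
    generalize pr p {ω | A ω = A ω₀ ∧ B ω = B ω₀ ∧ C ω = C ω₀} = x at *
    generalize pr p {ω | C ω = C ω₀} = y at *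
    generalize pr p {ω | A ω = A ω₀ ∧ C ω = C ω₀} = z at *
    generalize pr p {ω | B ω = B ω₀ ∧ C ω = C ω₀} = w at *
    by_contra hne
    have hlt : Real.log (z * w / (x * y)) < z * w / (x * y) - 1 := by
      refine Real.log_lt_sub_one_of_pos (by positivity) fun h => hne ?_
      rw [div_eq_one_iff_eq (by positivity)] at h
      exact h.symm
    have hinv : Real.log (x * y / (z * w)) = -Real.log (z * w / (x * y)) := by
      rw [← Real.log_inv, inv_div]
    have hx : x - z * w / y = x * (1 - z * w / (x * y)) := by field_simp
    rw [hinv, hx] at hc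
    have := mul_left_cancel₀ h1.ne' hc
    linarith
  · intro h
    refine Finset.sum_eq_zero fun a _ => Finset.sum_eq_zero fun b _ =>
      Finset.sum_eq_zero fun c _ => ?_
    by_cases h0 : pr p {ω | A ω = a ∧ B ω = b ∧ C ω = c} = 0
    · rw [h0, zero_mul]
    · obtain ⟨ω₀, rfl, rfl, rfl⟩ := exists_mem_of_pr_ne_zero h0
      rw [h ω₀, div_self, Real.log_one, mul_zero]
      refine (mul_pos (pr_pos_of_mem hp (ω := ω₀) ?_) (pr_pos_of_mem hp (ω := ω₀) ?_)).ne' <;>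
        exact ⟨rfl, rfl⟩

end ProbabilityOfEvents

section CausalBlankets

variable {m n : ℕ} {𝒳 : Type}

lemma past_eq_past_iff {S : Finset (Fin m)} {j : Fin n} {ω ω' : Traj m n 𝒳} :
    past S j ω = past S j ω' ↔ ∀ k ∈ S, ∀ t < j, ω k t = ω' k t := by
  constructor
  · intro h k hk t ht
    simpa [past, hk, ht] using congrFun (congrFun h k) t
  · intro h
    funext k t
    unfold past
    split_ifs with hkt
    · rw [h k hkt.1 t hkt.2]
    · rfl

lemma past_eq_past_of_subset {S T : Finset (Fin m)} (hST : S ⊆ T) {j : Fin n}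
    {ω ω' : Traj m n 𝒳} (h : past T j ω = past T j ω') : past S j ω = past S j ω' :=
  past_eq_past_iff.2 fun k hk => past_eq_past_iff.1 h k (hST hk)

lemma past_union_eq_iff {S T : Finset (Fin m)} {j : Fin n} {ω ω' : Traj m n 𝒳} :
    past (S ∪ T) j ω = past (S ∪ T) j ω' ↔
      past S j ω = past S j ω' ∧ past T j ω = past T j ω' := by
  simp only [past_eq_past_iff, Finset.mem_union, or_imp, forall_and]

variable [Fintype 𝒳]

/-- The conditional probability of the value `ω i j` given that the processes in `T` follow
`ω` before time `j`. -/
noncomputable def condProb (p : Traj m n 𝒳 → ℝ) (i : Fin m) (j : Fin n)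
    (T : Finset (Fin m)) (ω : Traj m n 𝒳) : ℝ :=
  pr p {ω' | ω' i j = ω i j ∧ past T j ω' = past T j ω} /
    pr p {ω' | past T j ω' = past T j ω}

variable {p : Traj m n 𝒳 → ℝ} {i : Fin m}

lemma condProb_congr {j : Fin n} {T : Finset (Fin m)} {ω ω' : Traj m n 𝒳}
    (hx : ω i j = ω' i j) (hT : past T j ω = past T j ω') :
    condProb p i j T ω = condProb p i j T ω' := by
  simp only [condProb, hx, hT]

/-- The transition probabilities of `X_i` given the full past depend only on the past of the
processes in `T`. -/
def DependsOnlyOn (p : Traj m n 𝒳 → ℝ) (i : Fin m) (T : Finset (Fin m)) : Prop :=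
  ∀ j ω ω', ω i j = ω' i j → past T j ω = past T j ω' →
    condProb p i j Finset.univ ω = condProb p i j Finset.univ ω'

lemma DependsOnlyOn.mono {S T : Finset (Fin m)} (hS : DependsOnlyOn p i S) (hST : S ⊆ T) :
    DependsOnlyOn p i T := fun j ω ω' hx hT =>
  hS j ω ω' hx (past_eq_past_of_subset hST hT)

lemma DependsOnlyOn.inter {S T : Finset (Fin m)} (hS : DependsOnlyOn p i S)
    (hT : DependsOnlyOn p i T) (hiS : i ∈ S) : DependsOnlyOn p i (S ∩ T) := by
  intro j ω ω' hx hST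
  rw [past_eq_past_iff] at hST
  let ν : Traj m n 𝒳 := fun k => if k ∈ S then ω k else ω' k
  have hνi : ω i j = ν i j := by simp [ν, hiS]
  refine (hS j ω ν hνi (past_eq_past_iff.2 fun k hk t _ => by simp [ν, hk])).trans
    (hT j ν ω' (hνi.symm.trans hx) (past_eq_past_iff.2 fun k hk t ht => ?_))
  by_cases hkS : k ∈ S
  · simpa [ν, hkS] using hST k (Finset.mem_inter.2 ⟨hkS, hk⟩) t ht
  · simp [ν, hkS]

lemma dependsOnlyOn_iff_condProb_eq (hp : ∀ ω, 0 < p ω) (T : Finset (Fin m)) :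
    DependsOnlyOn p i T ↔
      ∀ j ω, condProb p i j Finset.univ ω = condProb p i j T ω := by
  constructor
  · intro h j ω
    have hpos : ∀ (S : Finset (Fin m)) (ν : Traj m n 𝒳),
        0 < pr p {ω' | past S j ω' = past S j ν} := fun S ν => pr_pos_of_mem hp (ω := ν) rfl
    refine eq_div_of_mul_eq (hpos T ω).ne' (pr_and_fiber_eq_mul hp (F := past Finset.univ j)
      (C := past T j) (fun ν ν' => past_eq_past_of_subset (Finset.subset_univ T))
      (fun ω' => ω' i j = ω i j) _ _ fun ν hν => ?_).symm
    let ν' : Traj m n 𝒳 := Function.update ν i (Function.update (ν i) j (ω i j))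
    have hν'x : ν' i j = ω i j := by simp [ν']
    have hν' : past Finset.univ j ν' = past Finset.univ j ν := by
      refine past_eq_past_iff.2 fun k _ t ht => ?_
      by_cases hk : k = i
      · subst hk
        simp [ν', ht.ne]
      · simp [ν', hk]
    have hνω := h j ν' ω hν'x
      ((past_eq_past_of_subset (Finset.subset_univ T) hν').trans hν)
    rw [← hνω, condProb, hν'x, hν', div_mul_cancel₀ _ (hpos _ ν).ne']
  · intro h j ω ω' hx hT
    rw [h, h, condProb_congr hx hT]

variable [DecidableEq 𝒳]

lemma di_eq_zero_iff (hp : ∀ ω, 0 < p ω) (S T : Finset (Fin m)) :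
    di p S i T = 0 ↔
      ∀ j ω, condProb p i j (S ∪ insert i T) ω = condProb p i j (insert i T) ω := by
  unfold di
  rw [Finset.sum_eq_zero_iff_of_nonneg fun j _ => cmi_nonneg hp _ _ _]
  simp only [Finset.mem_univ, true_implies]
  refine forall_congr' fun j => (cmi_eq_zero_iff hp _ _ _).trans (forall_congr' fun ω => ?_)
  have hC : ∀ ω' : Traj m n 𝒳, ((past {i} j ω', past T j ω') = (past {i} j ω, past T j ω)) ↔
      past (insert i T) j ω' = past (insert i T) j ω := fun ω' => by
    rw [Finset.insert_eq, past_union_eq_iff, Prod.mk.injEq]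
  have hABC : ∀ ω' : Traj m n 𝒳, (past S j ω' = past S j ω ∧ ω' i j = ω i j ∧
      past (insert i T) j ω' = past (insert i T) j ω) ↔ (ω' i j = ω i j ∧
      past (S ∪ insert i T) j ω' = past (S ∪ insert i T) j ω) := fun ω' => by
    rw [past_union_eq_iff]; tauto
  simp only [hC, hABC, ← past_union_eq_iff, condProb]
  have hpos : ∀ U : Finset (Fin m), pr p {ω' | past U j ω' = past U j ω} ≠ 0 := fun U =>
    ne_of_gt (pr_pos_of_mem hp (ω := ω) rfl)
  rw [div_eq_div_iff (hpos _) (hpos _),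
    mul_comm (pr p {ω' | past (S ∪ insert i T) j ω' = past (S ∪ insert i T) j ω})]

lemma isCausalBlanket_iff (hp : ∀ ω, 0 < p ω) (S : Finset (Fin m)) :
    IsCausalBlanket p i S ↔ i ∉ S ∧ DependsOnlyOn p i (insert i S) := by
  have hS : Finset.univ.erase i \ S ∪ insert i S = Finset.univ := by
    ext k
    simp only [Finset.mem_union, Finset.mem_sdiff, Finset.mem_erase, Finset.mem_insert,
      Finset.mem_univ]
    tauto
  rw [IsCausalBlanket, di_eq_zero_iff hp, hS, dependsOnlyOn_iff_condProb_eq hp,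
    Finset.subset_erase]
  simp

lemma IsCausalBlanket.inter (hp : ∀ ω, 0 < p ω) {S T : Finset (Fin m)}
    (hS : IsCausalBlanket p i S) (hT : IsCausalBlanket p i T) : IsCausalBlanket p i (S ∩ T) := by
  rw [isCausalBlanket_iff hp] at *
  refine ⟨fun h => hS.1 (Finset.mem_inter.1 h).1, ?_⟩
  rw [Finset.insert_inter_distrib]
  exact hS.2.inter hT.2 (Finset.mem_insert_self _ _)

lemma IsCausalBlanket.mono (hp : ∀ ω, 0 < p ω) {S T : Finset (Fin m)}
    (hS : IsCausalBlanket p i S) (hST : S ⊆ T) (hi : i ∉ T) : IsCausalBlanket p i T := by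
  rw [isCausalBlanket_iff hp] at *
  exact ⟨hi, hS.2.mono (Finset.insert_subset_insert i hST)⟩

lemma IsCausalBoundary.subset (hp : ∀ ω, 0 < p ω) {A B : Finset (Fin m)}
    (hA : IsCausalBoundary p i A) (hB : IsCausalBlanket p i B) : A ⊆ B := by
  have h := Finset.eq_of_subset_of_card_le Finset.inter_subset_left
    (hA.2 _ (hA.1.inter hp hB))
  exact Finset.inter_eq_left.1 h

lemma IsCausalBlanket.di_erase_eq_zero_iff (hp : ∀ ω, 0 < p ω) {B : Finset (Fin m)}
    (hB : IsCausalBlanket p i B) {k : Fin m} (hk : k ∈ B) :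
    di p {k} i (B.erase k) = 0 ↔ IsCausalBlanket p i (B.erase k) := by
  have hB' := (isCausalBlanket_iff hp B).1 hB
  have hi : i ∉ B.erase k := fun h => hB'.1 (Finset.mem_of_mem_erase h)
  have hins : {k} ∪ insert i (B.erase k) = insert i B := by
    rw [← Finset.insert_eq, Finset.insert_comm, Finset.insert_erase hk]
  rw [isCausalBlanket_iff hp, di_eq_zero_iff hp, hins, dependsOnlyOn_iff_condProb_eq hp,
    and_iff_right hi]
  simp only [(dependsOnlyOn_iff_condProb_eq hp _).1 hB'.2]

lemma IsCausalBoundary.di_erase_eq_zero_iff (hp : ∀ ω, 0 < p ω) {A B : Finset (Fin m)}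
    (hA : IsCausalBoundary p i A) (hB : IsCausalBlanket p i B) {k : Fin m} (hk : k ∈ B) :
    di p {k} i (B.erase k) = 0 ↔ k ∉ A := by
  rw [hB.di_erase_eq_zero_iff hp hk]
  constructor
  · intro h hkA
    exact Finset.notMem_erase k B (hA.subset hp h hkA)
  · intro hkA
    exact hA.1.mono hp (Finset.subset_erase.2 ⟨hA.subset hp hB, hkA⟩)
      fun h => ((isCausalBlanket_iff hp B).1 hB).1 (Finset.mem_of_mem_erase h)

end CausalBlankets

/-- correctness of the greedy elimination algorithm. Under Assumption 1,
let `B` be a causal Markov blanket of `X_i`, `k ∈ B`, and `A(i)` the causal Markov boundary.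
Then `I(X_k → X_i ‖ X_{B∖{k}}) = 0` iff `k ∉ A(i)`, and in that case `B∖{k}` is again a
causal Markov blanket. Consequently any causal Markov blanket `B'` with
`I(X_k → X_i ‖ X_{B'∖{k}}) > 0` for every `k ∈ B'` equals `A(i)` (so the deletion procedure
terminates at `A(i)` regardless of the order of deletions). -/
theorem stmt_10 {m n : ℕ} (hm : 2 ≤ m) (hn : 1 ≤ n)
    {𝒳 : Type} [Fintype 𝒳] [DecidableEq 𝒳] [Nonempty 𝒳]
    (p : Traj m n 𝒳 → ℝ) (hp : Assumption1 p)
    (i : Fin m) (A : Finset (Fin m)) (hA : IsCausalBoundary p i A)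
    (B : Finset (Fin m)) (hB : IsCausalBlanket p i B) (k : Fin m) (hk : k ∈ B) :
    (di p {k} i (B.erase k) = 0 ↔ k ∉ A) ∧
      (di p {k} i (B.erase k) = 0 → IsCausalBlanket p i (B.erase k)) ∧
      (∀ B' : Finset (Fin m), IsCausalBlanket p i B' →
        (∀ k' ∈ B', 0 < di p {k'} i (B'.erase k')) → B' = A) := by
  refine ⟨hA.di_erase_eq_zero_iff hp.1 hB hk, (hB.di_erase_eq_zero_iff hp.1 hk).1,
    fun B' hB' hpos => ?_⟩
  refine Finset.Subset.antisymm (fun k' hk' => ?_) (hA.subset hp.1 hB')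
  by_contra hkA
  exact (hpos k' hk').ne' ((hA.di_erase_eq_zero_iff hp.1 hB' hk').2 hkA)
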